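/- Let A₁ and A₂ be nondeterministic Büchi automata over the same alphabet Σ, let B = A₁ × KVMH(A₂) be the product generalized Büchi automaton with condition {β₁, β₂} = {α₁ × L₂, L₁ × α₂} (where L₁, α₁ are the states and accepting states of A₁ and L₂, α₂ those of KVMH(A₂)), and let F'_B = ν y · ( μ x₁ · [Pre^B(x₁) ∪ (Pre^B(y) ∩ β₁)] ∩ μ x₂ · [Pre^B(x₂) ∪ (Pre^B(y) ∩ β₂)] ). Then L(A₁) ⊆ L(A₂) if and only if ι_B ∉ F'_B, where ι_B is the initial state of B. -/

import Mathlib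

/-!
The theorem combines an emptiness test with a complementation.

*Emptiness.* The states of an accepting run form a post-fixed point of the outer operator, hence lie
in its greatest fixed point. Conversely, from every state of the fixed point one can reach each
accepting set in at least one step without leaving the fixed point; alternating such finite paths
forever gives an accepting run, on a state space of any size.

*Complementation, words of `M`.* Along an accepting run `ρ` of `M`, the least rank `n` with
`(ρ i, n)` in the first component of a run of `KVMH M k` never increases, so it is eventually
constant, and its limit is even because `ρ` keeps visiting accepting states. After the next time the
second component is empty, the pair with this limit rank enters it and never leaves, so the run of
`KVMH M k` is rejecting.

*Complementation, words rejected by `M`.* Rank the run DAG by alternately deleting the vertices that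
start no infinite path and those from which no accepting state is reachable. On a rejected word,
every deletion of the second kind removes an infinite path without accepting states. These paths are
pairwise disjoint, so there are at most as many as non-accepting states, which bounds the ranks by
`2 (|L| - |α|)`. No infinite path has only even ranks, so by Kőnig's lemma the obligation sets
derived from the ranks become empty again and again.
-/

/-- A nondeterministic Büchi automaton (NBW) over states `Q` and alphabet `A`:
an initial state, a transition function `δ : Q × A → 2^Q` and accepting states. -/
structure NBW (Q : Type*) (A : Type*) where
  init : Q
  delta : Q → A → Set Q
  acc : Set Q

namespace NBW

variable {Q A : Type*}

/-- A run of an NBW on the infinite word `w`. -/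
def IsRun (M : NBW Q A) (w : ℕ → A) (ρ : ℕ → Q) : Prop :=
  ρ 0 = M.init ∧ ∀ i, ρ (i + 1) ∈ M.delta (ρ i) (w i)

/-- The language of an NBW: words having a run visiting accepting states infinitely often. -/
def Lang (M : NBW Q A) : Set (ℕ → A) :=
  {w | ∃ ρ, M.IsRun w ρ ∧ ∀ n, ∃ i ≥ n, ρ i ∈ M.acc}

/-- `Pre_σ(S)`: the σ-predecessors of the set `S`. -/
def PreSigma (M : NBW Q A) (σ : A) (S : Set Q) : Set Q :=
  {l | ∃ l' ∈ S, l' ∈ M.delta l σ}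

/-- `Pre(S) = ⋃_σ Pre_σ(S)`. -/
def Pre (M : NBW Q A) (S : Set Q) : Set Q :=
  {l | ∃ σ, ∃ l' ∈ S, l' ∈ M.delta l σ}

/-- A pre-order `r` is a simulation for the NBW `M`. -/
def Simulation (M : NBW Q A) (r : Q → Q → Prop) : Prop :=
  (∀ l1 l2 l3 σ, r l3 l1 → l2 ∈ M.delta l1 σ →
      ∃ l4, r l4 l2 ∧ l4 ∈ M.delta l3 σ) ∧
  (∀ l ∈ M.acc, ∀ l', r l' l → l' ∈ M.acc)

end NBW

/-- A set `S` is `r`-(downward-)closed. -/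
def RClosed {Q : Type*} (r : Q → Q → Prop) (S : Set Q) : Prop :=
  ∀ l1 l2, r l1 l2 → l2 ∈ S → l1 ∈ S
/-- `Q_k`: sets of pairs `(l, n)` with `n ≤ k` and `n` even whenever `l ∈ α`. -/
def Qk {Q A : Type*} (M : NBW Q A) (k : ℕ) : Set (Set (Q × ℕ)) :=
  {s | ∀ p ∈ s, p.2 ≤ k ∧ (p.1 ∈ M.acc → Even p.2)}

/-- `odd = L × [k]^odd`. -/
def kvOdd (Q : Type*) (k : ℕ) : Set (Q × ℕ) := {p | Odd p.2 ∧ p.2 ≤ k}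

/-- `∀ (l,n) ∈ s, ∀ l' ∈ δ(l,σ), ∃ n' ≤ n, (l',n') ∈ s'`. -/
def kvStep {Q A : Type*} (M : NBW Q A) (σ : A) (s s' : Set (Q × ℕ)) : Prop :=
  ∀ p ∈ s, ∀ l' ∈ M.delta p.1 σ, ∃ n' ≤ p.2, (l', n') ∈ s'

-- The composition of the Kupferman-Vardi and Miyano-Hayashi constructions:
-- an NBW over `Q_k × Q_k` (embedded in pairs of sets of pairs) accepting `L^c(M)`
-- when `k = 2(|L| - |α|)`.
open Classical in
noncomputable def KVMH {Q A : Type*} (M : NBW Q A) (k : ℕ) :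
    NBW (Set (Q × ℕ) × Set (Q × ℕ)) A where
  init := ({(M.init, k)}, ∅)
  delta := fun p σ =>
    if p.2 = ∅ then
      {q | ∃ s' ∈ Qk M k, q = (s', s' \ kvOdd Q k) ∧ kvStep M σ p.1 s'}
    else
      {q | ∃ s' ∈ Qk M k, ∃ o', q = (s', o' \ kvOdd Q k) ∧ o' ⊆ s' ∧
            kvStep M σ p.1 s' ∧ kvStep M σ p.2 o'}
  acc := {p | p.2 = ∅}

/-- The pre-order `≼_univ` on `Q_k × Q_k`. -/
def univLe {Q : Type*} (p q : Set (Q × ℕ) × Set (Q × ℕ)) : Prop :=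
  (∀ x ∈ p.1, ∃ n' ≤ x.2, (x.1, n') ∈ q.1) ∧
  (∀ x ∈ p.2, ∃ n' ≤ x.2, (x.1, n') ∈ q.2) ∧
  (p.2 = ∅ ↔ q.2 = ∅)
/-- A generalized Büchi automaton with two accepting sets `β₁, β₂`. -/
structure GBA (Q : Type*) (A : Type*) where
  init : Q
  delta : Q → A → Set Q
  acc1 : Set Q
  acc2 : Set Q

namespace GBA

variable {Q A : Type*}

def IsRun (B : GBA Q A) (w : ℕ → A) (ρ : ℕ → Q) : Prop :=
  ρ 0 = B.init ∧ ∀ i, ρ (i + 1) ∈ B.delta (ρ i) (w i)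

/-- Language: words with a run visiting both `β₁` and `β₂` infinitely often. -/
def Lang (B : GBA Q A) : Set (ℕ → A) :=
  {w | ∃ ρ, B.IsRun w ρ ∧ (∀ n, ∃ i ≥ n, ρ i ∈ B.acc1) ∧ (∀ n, ∃ i ≥ n, ρ i ∈ B.acc2)}

def Pre (B : GBA Q A) (S : Set Q) : Set Q :=
  {l | ∃ σ, ∃ l' ∈ S, l' ∈ B.delta l σ}

def preHom (B : GBA Q A) : Set Q →o Set Q :=
  ⟨B.Pre, by rintro S T hST l ⟨σ, l', hl', hd⟩; exact ⟨σ, l', hST hl', hd⟩⟩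

/-- `x ↦ Pre(x) ∪ (Pre(Y) ∩ β)`. -/
def innerHom (B : GBA Q A) (β : Set Q) (Y : Set Q) : Set Q →o Set Q :=
  ⟨fun X => B.Pre X ∪ (B.Pre Y ∩ β), by
    intro S T hST
    exact Set.union_subset_union_left _ ((preHom B).mono hST)⟩

/-- `y ↦ μx₁·[Pre(x₁) ∪ (Pre(y) ∩ β₁)] ∩ μx₂·[Pre(x₂) ∪ (Pre(y) ∩ β₂)]`. -/
def outerHom (B : GBA Q A) : Set Q →o Set Q :=
  ⟨fun Y => OrderHom.lfp (B.innerHom B.acc1 Y) ∩ OrderHom.lfp (B.innerHom B.acc2 Y), by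
    intro Y Y' hY
    apply Set.inter_subset_inter <;>
    · apply OrderHom.lfp.mono
      intro X
      exact Set.union_subset_union_right _
        (Set.inter_subset_inter_left _ ((preHom B).mono hY))⟩

/-- `F'_B = ν y · (μx₁·[Pre(x₁) ∪ (Pre(y) ∩ β₁)] ∩ μx₂·[Pre(x₂) ∪ (Pre(y) ∩ β₂)])`. -/
def FixF (B : GBA Q A) : Set Q := OrderHom.gfp B.outerHom

end GBA

/-- The product of two Büchi automata, with generalized Büchi condition
`{β₁, β₂} = {α₁ × L₂, L₁ × α₂}`. -/
def NBW.prod {Q1 Q2 A : Type*} (M1 : NBW Q1 A) (M2 : NBW Q2 A) : GBA (Q1 × Q2) A where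
  init := (M1.init, M2.init)
  delta := fun p σ => {q | q.1 ∈ M1.delta p.1 σ ∧ q.2 ∈ M2.delta p.2 σ}
  acc1 := {p | p.1 ∈ M1.acc}
  acc2 := {p | p.2 ∈ M2.acc}

open Filter Relation

section InfinitePaths

variable {V : Type*} {R : V → V → Prop}

/-- `ρ` is an infinite path of the directed graph `R`. -/
def IsInfinitePath (R : V → V → Prop) (ρ : ℕ → V) : Prop :=
  ∀ i, R (ρ i) (ρ (i + 1))

lemma IsInfinitePath.reflTransGen {ρ : ℕ → V} (hρ : IsInfinitePath R ρ) {i j : ℕ} (hij : i ≤ j) :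
    ReflTransGen R (ρ i) (ρ j) :=
  Nat.rel_of_forall_rel_succ_of_le (ReflTransGen R) (fun n => .single (hρ n)) hij

lemma exists_walk_of_transGen {u v : V} (h : TransGen R u v) :
    ∃ (n : ℕ) (p : ℕ → V), p 0 = u ∧ p (n + 1) = v ∧ ∀ i ≤ n, R (p i) (p (i + 1)) := by
  induction h using TransGen.head_induction_on with
  | @single u hR => exact ⟨0, fun i => Nat.casesOn i u fun _ => v, rfl, rfl, by simpa⟩
  | @head u u' hR _ ih =>
    obtain ⟨n, p, rfl, hn, hp⟩ := ih
    refine ⟨n + 1, fun i => Nat.casesOn i u p, rfl, hn, fun i hi => ?_⟩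
    cases i with
    | zero => exact hR
    | succ i => exact hp i (Nat.le_of_succ_le_succ hi)

/-- Cut `ℕ` into consecutive blocks of lengths `n t + 1`; `pos j = (t, i)` says that `j` is the
`i`-th element of the `t`-th block. -/
lemma exists_block_position (n : ℕ → ℕ) :
    ∃ pos : ℕ → ℕ × ℕ, pos 0 = (0, 0) ∧ (∀ t, ∃ j ≥ t, pos j = (t, 0)) ∧
      ∀ j, (pos j).2 < n (pos j).1 ∧ pos (j + 1) = ((pos j).1, (pos j).2 + 1) ∨
        (pos j).2 = n (pos j).1 ∧ pos (j + 1) = ((pos j).1 + 1, 0) := by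
  let next : ℕ × ℕ → ℕ × ℕ := fun a => if a.2 < n a.1 then (a.1, a.2 + 1) else (a.1 + 1, 0)
  let pos : ℕ → ℕ × ℕ := fun j => next^[j] (0, 0)
  have pos_succ (j : ℕ) : pos (j + 1) = next (pos j) := Function.iterate_succ_apply' next j _
  have pos_le (j : ℕ) : (pos j).2 ≤ n (pos j).1 := by
    induction j with
    | zero => exact Nat.zero_le _
    | succ j _ => rw [pos_succ]; grind
  have pos_add {t j : ℕ} (hj : pos j = (t, 0)) (i : ℕ) (hi : i ≤ n t) : pos (j + i) = (t, i) := by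
    induction i with
    | zero => exact hj
    | succ i ih => rw [← add_assoc, pos_succ, ih (by omega)]; grind
  refine ⟨pos, rfl, fun t => ?_, fun j => by grind⟩
  induction t with
  | zero => exact ⟨0, le_rfl, rfl⟩
  | succ t ih =>
    obtain ⟨j, hj, hpos⟩ := ih
    exact ⟨j + n t + 1, by omega, by rw [pos_succ, pos_add hpos _ le_rfl]; simp [next]⟩

lemma exists_isInfinitePath_of_transGen {x : ℕ → V} (hx : ∀ t, TransGen R (x t) (x (t + 1))) :
    ∃ ρ, IsInfinitePath R ρ ∧ ρ 0 = x 0 ∧ ∀ t, ∃ i ≥ t, ρ i = x t := by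
  choose n p hp₀ hpn hp using fun t => exists_walk_of_transGen (hx t)
  obtain ⟨pos, pos_zero, hvisit, hstep⟩ := exists_block_position n
  refine ⟨fun j => p (pos j).1 (pos j).2, fun j => ?_, by simp only [pos_zero, hp₀], fun t => ?_⟩
  · obtain ⟨hlt, hsucc⟩ | ⟨heq, hsucc⟩ := hstep j
    · simpa only [hsucc] using hp _ _ hlt.le
    · simpa only [hsucc, heq, hpn, hp₀] using hp (pos j).1 _ le_rfl
  · obtain ⟨j, hj, hpos⟩ := hvisit t
    exact ⟨j, hj, by simp only [hpos, hp₀]⟩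

lemma exists_schedule (ι : Type*) [Nonempty ι] [Countable ι] :
    ∃ s : ℕ → ι, ∀ c, ∃ᶠ t in atTop, s t = c := by
  obtain ⟨e, he⟩ := exists_surjective_nat ι
  refine ⟨fun t => e t.unpair.1, fun c => frequently_atTop.2 fun n => ?_⟩
  obtain ⟨m, rfl⟩ := he c
  exact ⟨Nat.pair m n, Nat.right_le_pair m n, by simp only [Nat.unpair_pair]⟩

lemma exists_isInfinitePath_frequently_mem {ι : Type*} [Nonempty ι] [Countable ι]
    {G : Set V} {P : ι → Set V} (h : ∀ v ∈ G, ∀ c, ∃ u ∈ G ∩ P c, TransGen R v u)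
    {v : V} (hv : v ∈ G) :
    ∃ ρ, IsInfinitePath R ρ ∧ ρ 0 = v ∧ ∀ c, ∃ᶠ i in atTop, ρ i ∈ P c := by
  obtain ⟨s, hs⟩ := exists_schedule ι
  choose f hf hR using fun v : G => h v v.2
  let x : ℕ → G := fun t => Nat.rec ⟨v, hv⟩ (fun t u => ⟨f u (s t), (hf u (s t)).1⟩) t
  have hx (t : ℕ) : TransGen R (x t).1 (x (t + 1)).1 := hR (x t) (s t)
  obtain ⟨ρ, hρ, hρ₀, hρx⟩ := exists_isInfinitePath_of_transGen hx
  refine ⟨ρ, hρ, hρ₀, fun c => frequently_atTop.2 fun n => ?_⟩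
  obtain ⟨t, ht, rfl⟩ := frequently_atTop.1 (hs c) n
  obtain ⟨i, hi, hit⟩ := hρx (t + 1)
  exact ⟨i, by omega, hit ▸ (hf (x t) (s t)).2⟩

open CategoryTheory in
/-- **Kőnig's lemma** for a sequence of finite levels. -/
lemma exists_seq_of_finite_levels {S : ℕ → Set V} {E : ℕ → V → V → Prop}
    (hfin : ∀ n, (S n).Finite) (hne : ∀ n, (S n).Nonempty)
    (hpred : ∀ n, ∀ v ∈ S (n + 1), ∃ u ∈ S n, E n u v) :
    ∃ x : ℕ → V, (∀ n, x n ∈ S n) ∧ ∀ n, E n (x n) (x (n + 1)) := by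
  choose f hf hE using fun n (v : S (n + 1)) => hpred n v v.2
  let F : ℕᵒᵖ ⥤ Type _ := Functor.ofOpSequence (X := fun n => S n) fun n =>
    ↾fun v => ⟨f n v, hf n v⟩
  have (j : ℕᵒᵖ) : Finite (F.obj j) := hfin j.unop
  have (j : ℕᵒᵖ) : Nonempty (F.obj j) := (hne j.unop).to_subtype
  obtain ⟨x, hx⟩ := nonempty_sections_of_finite_inverse_system F
  let y (n : ℕ) : S n := x (.op n)
  have hy (n : ℕ) : f n (y (n + 1)) = y n := by
    have hcompat := hx (homOfLE n.le_succ).op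
    rw [Functor.ofOpSequence_map_homOfLE_succ] at hcompat
    exact congrArg Subtype.val hcompat
  exact ⟨fun n => y n, fun n => (y n).2, fun n => by simpa only [hy] using hE n (y (n + 1))⟩

lemma exists_eventually_eq_of_antitone {ι α : Type*} [Preorder ι] [Nonempty ι] [LinearOrder α]
    [WellFoundedLT α] {f : ι → α} (hf : Antitone f) : ∃ c, ∀ᶠ i in atTop, f i = c :=
  ⟨f (Function.argmin f), (eventually_ge_atTop _).mono fun _ hi =>
    (hf hi).antisymm (Function.argmin_le f _)⟩

end InfinitePaths

section OddRankings

variable {V : Type*} {R : V → V → Prop} {F : Set V}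

/-- The odd rankings of Kupferman and Vardi: they witness that no infinite path of `R` visits `F`
infinitely often. The ranks along an infinite path stabilize, and the stable rank must be odd; the
last field says this by excluding infinite paths of even rank throughout. -/
structure IsOddRanking (R : V → V → Prop) (F : Set V) (r : V → ℕ) : Prop where
  le_of_rel : ∀ ⦃u v⦄, R u v → r v ≤ r u
  even_of_mem : ∀ ⦃v⦄, v ∈ F → Even (r v)
  not_forall_even : ∀ ⦃ρ⦄, IsInfinitePath R ρ → ¬ ∀ i, Even (r (ρ i))

open Classical in
/-- The decreasing sequence of vertex sets by which Kupferman and Vardi rank a graph: even steps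
keep the vertices that start an infinite path in the current set, odd steps those from which `F` can
still be reached. The sets are closed under predecessors, so it makes no difference whether `F` is
reached inside the current set. -/
noncomputable def peel (R : V → V → Prop) (F : Set V) : ℕ → Set V
  | 0 => Set.univ
  | n + 1 =>
    if Even n then {v | ∃ ρ, IsInfinitePath R ρ ∧ ρ 0 = v ∧ ∀ i, ρ i ∈ peel R F n}
    else {v | ∃ u ∈ F ∩ peel R F n, ReflTransGen R v u}

lemma mem_peel_succ_of_even {n : ℕ} (hn : Even n) {v : V} :
    v ∈ peel R F (n + 1) ↔ ∃ ρ, IsInfinitePath R ρ ∧ ρ 0 = v ∧ ∀ i, ρ i ∈ peel R F n := by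
  rw [peel, if_pos hn, Set.mem_ofPred_eq]

lemma mem_peel_succ_of_odd {n : ℕ} (hn : Odd n) {v : V} :
    v ∈ peel R F (n + 1) ↔ ∃ u ∈ F ∩ peel R F n, ReflTransGen R v u := by
  rw [peel, if_neg (Nat.not_even_iff_odd.2 hn), Set.mem_ofPred_eq]

lemma mem_peel_of_rel {n : ℕ} {u v : V} (huv : R u v) (hv : v ∈ peel R F n) : u ∈ peel R F n := by
  induction n generalizing u v with
  | zero => trivial
  | succ n ih =>
    obtain hn | hn := n.even_or_odd
    · rw [mem_peel_succ_of_even hn] at hv ⊢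
      obtain ⟨ρ, hρ, rfl, hmem⟩ := hv
      refine ⟨fun i => Nat.casesOn i u ρ, fun i => ?_, rfl, fun i => ?_⟩
      · cases i with
        | zero => exact huv
        | succ i => exact hρ i
      · cases i with
        | zero => exact ih huv (hmem 0)
        | succ i => exact hmem i
    · rw [mem_peel_succ_of_odd hn] at hv ⊢
      obtain ⟨t, ht, hvt⟩ := hv
      exact ⟨t, ht, .head huv hvt⟩

lemma mem_peel_of_reflTransGen {n : ℕ} {u v : V} (huv : ReflTransGen R u v)
    (hv : v ∈ peel R F n) : u ∈ peel R F n := by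
  induction huv using ReflTransGen.head_induction_on with
  | refl => exact hv
  | head h _ ih => exact mem_peel_of_rel h ih

lemma peel_antitone : Antitone (peel R F) := by
  refine antitone_nat_of_succ_le fun n v hv => ?_
  obtain hn | hn := n.even_or_odd
  · obtain ⟨ρ, -, rfl, hmem⟩ := (mem_peel_succ_of_even hn).1 hv
    exact hmem 0
  · obtain ⟨u, hu, hvu⟩ := (mem_peel_succ_of_odd hn).1 hv
    exact mem_peel_of_reflTransGen hvu hu.2

/-- The index of the step of `peel` that deletes `v`, and `0` if there is none. -/
noncomputable def peelRank (R : V → V → Prop) (F : Set V) (v : V) : ℕ :=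
  sInf {n | v ∉ peel R F (n + 1)}

lemma mem_peel_peelRank (v : V) : v ∈ peel R F (peelRank R F v) := by
  cases hn : peelRank R F v with
  | zero => trivial
  | succ n =>
    exact not_not.1 (Nat.notMem_of_lt_sInf (show n < peelRank R F v by omega))

lemma peelRank_le {n : ℕ} {v : V} (hv : v ∉ peel R F (n + 1)) : peelRank R F v ≤ n :=
  Nat.sInf_le hv

lemma notMem_peel_peelRank_succ {n : ℕ} {v : V} (hv : v ∉ peel R F (n + 1)) :
    v ∉ peel R F (peelRank R F v + 1) :=
  Nat.sInf_mem (s := {n | v ∉ peel R F (n + 1)}) ⟨n, hv⟩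

lemma peelRank_eq {n : ℕ} {v : V} (hv : v ∈ peel R F n) (hv' : v ∉ peel R F (n + 1)) :
    peelRank R F v = n :=
  (peelRank_le hv').antisymm <| not_lt.1 fun hlt =>
    notMem_peel_peelRank_succ hv' (peel_antitone hlt hv)

lemma isOddRanking_peelRank {n : ℕ} (hn : peel R F (n + 1) = ∅) :
    IsOddRanking R F (peelRank R F) := by
  have hout (v : V) : v ∉ peel R F (peelRank R F v + 1) :=
    notMem_peel_peelRank_succ (n := n) (hn ▸ Set.notMem_empty v)
  have hle {u v : V} (huv : R u v) : peelRank R F v ≤ peelRank R F u :=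
    not_lt.1 fun hlt =>
      hout u (peel_antitone hlt (mem_peel_of_rel huv (mem_peel_peelRank v)))
  refine ⟨fun _ _ => hle, fun v hv => ?_, fun ρ hρ heven => ?_⟩
  · by_contra hodd
    exact hout v ((mem_peel_succ_of_odd (Nat.not_even_iff_odd.1 hodd)).2
      ⟨v, ⟨hv, mem_peel_peelRank v⟩, .refl⟩)
  · obtain ⟨c, hc⟩ := exists_eventually_eq_of_antitone
      (antitone_nat_of_succ_le (f := fun i => peelRank R F (ρ i)) fun i => hle (hρ i))
    obtain ⟨m, hm⟩ := eventually_atTop.1 hc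
    refine hout (ρ m) ((mem_peel_succ_of_even (heven m)).2
      ⟨fun i => ρ (m + i), fun i => hρ (m + i), rfl, fun i => ?_⟩)
    rw [hm m le_rfl, ← hm (m + i) (m.le_add_right i)]
    exact mem_peel_peelRank _

lemma exists_isInfinitePath_peelRank_eq
    (hF : ∀ ρ, IsInfinitePath R ρ → ∀ᶠ i in atTop, ρ i ∉ F) {n : ℕ} (hn : Even n)
    (hne : (peel R F (n + 1)).Nonempty) :
    ∃ ρ, IsInfinitePath R ρ ∧ ∀ i, ρ i ∉ F ∧ peelRank R F (ρ i) = n + 1 := by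
  have mem_of_path {ρ : ℕ → V} (hρ : IsInfinitePath R ρ) (hmem : ∀ i, ρ i ∈ peel R F n) (i : ℕ) :
      ρ i ∈ peel R F (n + 1) :=
    (mem_peel_succ_of_even hn).2
      ⟨fun j => ρ (i + j), fun j => hρ (i + j), rfl, fun j => hmem (i + j)⟩
  -- Otherwise `F` could be reached again and again.
  obtain ⟨v, hv, hv'⟩ : ∃ v ∈ peel R F (n + 1), v ∉ peel R F (n + 2) := by
    by_contra! hsub
    have hreach : ∀ v ∈ peel R F (n + 1), ∀ _ : Unit,
        ∃ u ∈ peel R F (n + 1) ∩ F, TransGen R v u := by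
      rintro v hv -
      obtain ⟨ρ, hρ, rfl, hmem⟩ := (mem_peel_succ_of_even hn).1 hv
      obtain ⟨u, hu, hρu⟩ :=
        (mem_peel_succ_of_odd hn.add_one).1 (hsub _ (mem_of_path hρ hmem 1))
      exact ⟨u, hu.symm, .head' (hρ 0) hρu⟩
    obtain ⟨v, hv⟩ := hne
    obtain ⟨ρ, hρ, -, hvisit⟩ := exists_isInfinitePath_frequently_mem hreach hv
    exact hvisit () (hF ρ hρ)
  obtain ⟨ρ, hρ, rfl, hmem⟩ := (mem_peel_succ_of_even hn).1 hv
  have hout (i : ℕ) : ρ i ∉ peel R F (n + 2) := fun hi =>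
    hv' (mem_peel_of_reflTransGen (hρ.reflTransGen i.zero_le) hi)
  refine ⟨ρ, hρ, fun i => ⟨fun hi => hout i ?_, peelRank_eq (mem_of_path hρ hmem i) (hout i)⟩⟩
  exact (mem_peel_succ_of_odd hn.add_one).2 ⟨ρ i, ⟨hi, mem_of_path hρ hmem i⟩, .refl⟩

lemma IsInfinitePath.level_eq {level : V → ℕ} (hlevel : ∀ u v, R u v → level v = level u + 1)
    {ρ : ℕ → V} (hρ : IsInfinitePath R ρ) (i : ℕ) : level (ρ i) = level (ρ 0) + i := by
  induction i with
  | zero => rfl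
  | succ i ih => rw [hlevel _ _ (hρ i), ih, add_assoc]

/-- Every odd rank below a surviving vertex is carried by an infinite path outside `F`, and these
paths are disjoint, so they meet a late level in distinct vertices. -/
lemma peel_eq_empty {level : V → ℕ} (hlevel : ∀ u v, R u v → level v = level u + 1) {m : ℕ}
    (hm : ∀ j, {v | level v = j ∧ v ∉ F}.encard ≤ m)
    (hF : ∀ ρ, IsInfinitePath R ρ → ∀ᶠ i in atTop, ρ i ∉ F) :
    peel R F (2 * m + 1) = ∅ := by
  by_contra hne
  choose ρ hρ hout hrank using fun i : Fin (m + 1) =>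
    exists_isInfinitePath_peelRank_eq hF (even_two_mul i.1) <|
      (Set.nonempty_iff_ne_empty.2 hne).mono (peel_antitone (by omega))
  let J := Finset.univ.sup fun i => level (ρ i 0)
  have hle (i : Fin (m + 1)) : level (ρ i 0) ≤ J :=
    Finset.le_sup (f := fun i => level (ρ i 0)) (Finset.mem_univ i)
  let x (i : Fin (m + 1)) : V := ρ i (J - level (ρ i 0))
  have hx (i : Fin (m + 1)) : x i ∈ {v | level v = J ∧ v ∉ F} :=
    ⟨((hρ i).level_eq hlevel _).trans (Nat.add_sub_of_le (hle i)), hout i _⟩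
  have x_injective : Function.Injective x := fun i i' h => by
    have := congrArg (peelRank R F) h
    simp only [x, hrank] at this
    omega
  have hcard : ((m + 1 : ℕ) : ℕ∞) ≤ m := calc
    ((m + 1 : ℕ) : ℕ∞) = ENat.card (Fin (m + 1)) := by
      rw [ENat.card_eq_coe_fintype_card, Fintype.card_fin]
    _ ≤ (Set.range x).encard := x_injective.encard_range
    _ ≤ {v | level v = J ∧ v ∉ F}.encard := Set.encard_le_encard (Set.range_subset_iff.2 hx)
    _ ≤ m := hm J
  exact m.lt_irrefl (Nat.cast_le.1 hcard)

lemma exists_isOddRanking {level : V → ℕ} (hlevel : ∀ u v, R u v → level v = level u + 1) {m : ℕ}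
    (hm : ∀ j, {v | level v = j ∧ v ∉ F}.encard ≤ m)
    (hF : ∀ ρ, IsInfinitePath R ρ → ∀ᶠ i in atTop, ρ i ∉ F) :
    ∃ r, IsOddRanking R F r ∧ ∀ v, r v ≤ 2 * m := by
  have hempty := peel_eq_empty hlevel hm hF
  exact ⟨peelRank R F, isOddRanking_peelRank hempty, fun v =>
    peelRank_le (hempty ▸ Set.notMem_empty v)⟩

end OddRankings

namespace GBA

variable {Q A : Type*} {B : GBA Q A} {q q' : Q}

/-- The transition graph of a generalized Büchi automaton, with the letters forgotten. -/
def Edge (B : GBA Q A) (q q' : Q) : Prop :=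
  ∃ σ, q' ∈ B.delta q σ

lemma mem_pre_iff {S : Set Q} : q ∈ B.Pre S ↔ ∃ q' ∈ S, B.Edge q q' :=
  ⟨fun ⟨σ, q', hq', hσ⟩ => ⟨q', hq', σ, hσ⟩, fun ⟨q', hq', σ, hσ⟩ => ⟨σ, q', hq', hσ⟩⟩

lemma mem_lfp_innerHom_iff {β Y : Set Q} :
    q ∈ OrderHom.lfp (B.innerHom β Y) ↔ ∃ p ∈ B.Pre Y ∩ β, ReflTransGen B.Edge q p := by
  constructor
  · refine fun hq => OrderHom.lfp_le (B.innerHom β Y)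
      (a := {q | ∃ p ∈ B.Pre Y ∩ β, ReflTransGen B.Edge q p}) ?_ hq
    rintro q (⟨σ, q', ⟨p, hp, hq'p⟩, hσ⟩ | hq)
    · exact ⟨p, hp, .head ⟨σ, hσ⟩ hq'p⟩
    · exact ⟨q, hq, .refl⟩
  · rintro ⟨p, hp, hqp⟩
    induction hqp using ReflTransGen.head_induction_on with
    | refl => exact OrderHom.map_lfp (B.innerHom β Y) ▸ Or.inr hp
    | head hR _ ih =>
      exact OrderHom.map_lfp (B.innerHom β Y) ▸ Or.inl (mem_pre_iff.2 ⟨_, ih, hR⟩)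

lemma mem_outerHom_iff {Y : Set Q} : q ∈ B.outerHom Y ↔
    ∀ c : Bool, ∃ p ∈ B.Pre Y ∩ cond c B.acc1 B.acc2, ReflTransGen B.Edge q p := by
  rw [Bool.forall_bool, and_comm]
  exact and_congr mem_lfp_innerHom_iff mem_lfp_innerHom_iff

lemma mem_FixF_iff : q ∈ B.FixF ↔
    ∀ c : Bool, ∃ p ∈ B.Pre B.FixF ∩ cond c B.acc1 B.acc2, ReflTransGen B.Edge q p := by
  rw [← mem_outerHom_iff, FixF, OrderHom.map_gfp]

lemma mem_FixF_of_edge (h : B.Edge q q') (hq' : q' ∈ B.FixF) : q ∈ B.FixF :=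
  mem_FixF_iff.2 fun c =>
    let ⟨p, hp, hq'p⟩ := mem_FixF_iff.1 hq' c
    ⟨p, hp, .head h hq'p⟩

lemma exists_mem_FixF_transGen (hq : q ∈ B.FixF) (c : Bool) :
    ∃ u ∈ B.FixF ∩ cond c B.acc1 B.acc2, TransGen B.Edge q u := by
  obtain ⟨p, ⟨hp, -⟩, hqp⟩ := mem_FixF_iff.1 hq c
  obtain ⟨q', hq', hpq'⟩ := mem_pre_iff.1 hp
  obtain ⟨u, ⟨hu, huc⟩, hq'u⟩ := mem_FixF_iff.1 hq' c
  obtain ⟨u', hu', huu'⟩ := mem_pre_iff.1 hu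
  exact ⟨u, ⟨mem_FixF_of_edge huu' hu', huc⟩, .trans_right hqp (.head' hpq' hq'u)⟩

lemma mem_FixF_of_isInfinitePath {ρ : ℕ → Q} (hρ : IsInfinitePath B.Edge ρ)
    (hvisit : ∀ c : Bool, ∀ n, ∃ i ≥ n, ρ i ∈ cond c B.acc1 B.acc2) (n : ℕ) : ρ n ∈ B.FixF := by
  suffices Set.range ρ ⊆ B.outerHom (Set.range ρ) from
    OrderHom.le_gfp B.outerHom this ⟨n, rfl⟩
  rintro _ ⟨n, rfl⟩
  refine mem_outerHom_iff.2 fun c => ?_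
  obtain ⟨i, hi, hic⟩ := hvisit c n
  exact ⟨ρ i, ⟨mem_pre_iff.2 ⟨ρ (i + 1), ⟨i + 1, rfl⟩, hρ i⟩, hic⟩, hρ.reflTransGen hi⟩

theorem init_mem_FixF_iff : B.init ∈ B.FixF ↔ B.Lang.Nonempty := by
  constructor
  · intro h
    obtain ⟨ρ, hρ, hρ₀, hvisit⟩ :=
      exists_isInfinitePath_frequently_mem (fun _ => exists_mem_FixF_transGen) h
    choose w hw using hρ
    exact ⟨w, ρ, ⟨hρ₀, hw⟩, frequently_atTop.1 (hvisit true), frequently_atTop.1 (hvisit false)⟩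
  · rintro ⟨w, ρ, ⟨hρ₀, hw⟩, h₁, h₂⟩
    rw [← hρ₀]
    exact mem_FixF_of_isInfinitePath (fun i => ⟨w i, hw i⟩) (Bool.forall_bool.2 ⟨h₂, h₁⟩) 0

end GBA

lemma NBW.lang_prod {Q₁ Q₂ A : Type*} (M₁ : NBW Q₁ A) (M₂ : NBW Q₂ A) :
    (M₁.prod M₂).Lang = M₁.Lang ∩ M₂.Lang := by
  ext w
  constructor
  · rintro ⟨ρ, ⟨hρ₀, hρ⟩, h₁, h₂⟩
    exact ⟨⟨fun i => (ρ i).1, ⟨congrArg Prod.fst hρ₀, fun i => (hρ i).1⟩, h₁⟩,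
      ⟨fun i => (ρ i).2, ⟨congrArg Prod.snd hρ₀, fun i => (hρ i).2⟩, h₂⟩⟩
  · rintro ⟨⟨ρ₁, ⟨hρ₁, hδ₁⟩, h₁⟩, ρ₂, ⟨hρ₂, hδ₂⟩, h₂⟩
    exact ⟨fun i => (ρ₁ i, ρ₂ i), ⟨Prod.ext hρ₁ hρ₂, fun i => ⟨hδ₁ i, hδ₂ i⟩⟩, h₁, h₂⟩

namespace NBW

variable {Q A : Type*} {M : NBW Q A} {w : ℕ → A}

/-- The states in which `M` can be after reading the first `j` letters of `w`. -/
def reachable (M : NBW Q A) (w : ℕ → A) : ℕ → Set Q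
  | 0 => {M.init}
  | j + 1 => {l' | ∃ l ∈ M.reachable w j, l' ∈ M.delta l (w j)}

/-- The edges of the run DAG of `M` on `w`, the vertex `(l, j)` being the state `l` at time `j`.
Pairs that occur in no run are kept as vertices, but without outgoing edges. -/
def RunEdge (M : NBW Q A) (w : ℕ → A) (u v : Q × ℕ) : Prop :=
  u.1 ∈ M.reachable w u.2 ∧ v.2 = u.2 + 1 ∧ v.1 ∈ M.delta u.1 (w u.2)

lemma exists_isRun_of_mem_reachable {j : ℕ} {τ : ℕ → Q} (hτ₀ : τ 0 ∈ M.reachable w j)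
    (hτ : ∀ i, τ (i + 1) ∈ M.delta (τ i) (w (j + i))) :
    ∃ ρ, M.IsRun w ρ ∧ ∀ i, ρ (j + i) = τ i := by
  induction j generalizing τ with
  | zero =>
    exact ⟨τ, ⟨hτ₀, fun i => by simpa only [zero_add] using hτ i⟩, fun i => by rw [zero_add]⟩
  | succ j ih =>
    obtain ⟨l, hl, hlτ⟩ := hτ₀
    obtain ⟨ρ, hρ, hρτ⟩ := ih (τ := fun i => Nat.casesOn i l τ) hl fun i => by
      cases i with
      | zero => exact hlτ
      | succ i => simpa only [add_assoc, add_comm 1] using hτ i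
    exact ⟨ρ, hρ, fun i => by rw [add_assoc, add_comm 1]; exact hρτ (i + 1)⟩

lemma eventually_notMem_acc_of_notMem_lang (hw : w ∉ M.Lang) {ρ : ℕ → Q × ℕ}
    (hρ : IsInfinitePath (M.RunEdge w) ρ) : ∀ᶠ i in atTop, ρ i ∉ Prod.fst ⁻¹' M.acc := by
  by_contra hvisit
  have htime (i : ℕ) : (ρ i).2 = (ρ 0).2 + i :=
    hρ.level_eq (level := Prod.snd) (fun _ _ h => h.2.1) i
  obtain ⟨τ, hτ, hτρ⟩ := exists_isRun_of_mem_reachable (τ := fun i => (ρ i).1) (hρ 0).1 fun i =>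
    htime i ▸ (hρ i).2.2
  refine hw ⟨τ, hτ, fun n => ?_⟩
  obtain ⟨i, hi, hacc⟩ := frequently_atTop.1 hvisit n
  exact ⟨(ρ 0).2 + i, by omega, by rw [hτρ]; exact hacc⟩

end NBW

section Complementation

variable {Q A : Type*} {M : NBW Q A} {k : ℕ} {σ : A} {w : ℕ → A}
  {p q : Set (Q × ℕ) × Set (Q × ℕ)}

lemma mem_delta_KVMH_of_eq_empty (hp : p.2 = ∅) : q ∈ (KVMH M k).delta p σ ↔
    (q.1 ∈ Qk M k ∧ kvStep M σ p.1 q.1) ∧ q.2 = q.1 \ kvOdd Q k := by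
  simp only [KVMH, hp, if_true]
  constructor
  · rintro ⟨s', hs', rfl, hstep⟩
    exact ⟨⟨hs', hstep⟩, rfl⟩
  · rintro ⟨⟨hs', hstep⟩, ho⟩
    exact ⟨q.1, hs', Prod.ext rfl ho, hstep⟩

lemma mem_delta_KVMH_of_ne_empty (hp : p.2 ≠ ∅) : q ∈ (KVMH M k).delta p σ ↔
    (q.1 ∈ Qk M k ∧ kvStep M σ p.1 q.1) ∧
      ∃ o' ⊆ q.1, kvStep M σ p.2 o' ∧ q.2 = o' \ kvOdd Q k := by
  simp only [KVMH, hp, if_false]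
  constructor
  · rintro ⟨s', hs', o', rfl, ho', hstep, hstep'⟩
    exact ⟨⟨hs', hstep⟩, o', ho', hstep', rfl⟩
  · rintro ⟨⟨hs', hstep⟩, o', ho', hstep', ho⟩
    exact ⟨q.1, hs', o', Prod.ext rfl ho, ho', hstep, hstep'⟩

lemma mem_Qk_and_kvStep_of_mem_delta_KVMH (h : q ∈ (KVMH M k).delta p σ) :
    q.1 ∈ Qk M k ∧ kvStep M σ p.1 q.1 := by
  by_cases hp : p.2 = ∅
  · exact ((mem_delta_KVMH_of_eq_empty hp).1 h).1
  · exact ((mem_delta_KVMH_of_ne_empty hp).1 h).1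

lemma exists_eventually_isLeast_of_kvStep {s : ℕ → Set (Q × ℕ)} {ρ : ℕ → Q} {n : ℕ}
    (hs : ∀ i, kvStep M (w i) (s i) (s (i + 1))) (hρ : ∀ i, ρ (i + 1) ∈ M.delta (ρ i) (w i))
    (hn : (ρ 0, n) ∈ s 0) : ∃ c, ∀ᶠ i in atTop, IsLeast {n | (ρ i, n) ∈ s i} c := by
  have hne (i : ℕ) : {n | (ρ i, n) ∈ s i}.Nonempty := by
    induction i with
    | zero => exact ⟨n, hn⟩
    | succ i ih =>
      obtain ⟨n, hn⟩ := ih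
      obtain ⟨n', -, hn'⟩ := hs i _ hn _ (hρ i)
      exact ⟨n', hn'⟩
  have hanti : Antitone fun i => sInf {n | (ρ i, n) ∈ s i} := antitone_nat_of_succ_le fun i => by
    obtain ⟨n', hle, hn'⟩ := hs i _ (Nat.sInf_mem (hne i)) _ (hρ i)
    exact (Nat.sInf_le hn').trans hle
  obtain ⟨c, hc⟩ := exists_eventually_eq_of_antitone hanti
  exact ⟨c, hc.mono fun i hi => hi ▸ ⟨Nat.sInf_mem (hne i), fun _ => Nat.sInf_le⟩⟩

lemma mem_snd_of_mem_delta_KVMH {l l' : Q} {c : ℕ} (hc : Even c)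
    (hp : p.2 = ∅ ∨ (l, c) ∈ p.2) (hl' : l' ∈ M.delta l σ) (hq : q ∈ (KVMH M k).delta p σ)
    (hleast : IsLeast {n | (l', n) ∈ q.1} c) : (l', c) ∈ q.2 := by
  have hodd : (l', c) ∉ kvOdd Q k := fun h => Nat.not_odd_iff_even.2 hc h.1
  obtain hp | hp := hp
  · rw [((mem_delta_KVMH_of_eq_empty hp).1 hq).2]
    exact ⟨hleast.1, hodd⟩
  · obtain ⟨-, o', ho', hstep, heq⟩ :=
      (mem_delta_KVMH_of_ne_empty (Set.nonempty_iff_ne_empty.1 ⟨_, hp⟩)).1 hq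
    obtain ⟨n', hle, hn'⟩ := hstep _ hp _ hl'
    obtain rfl : n' = c := hle.antisymm (hleast.2 (ho' hn'))
    rw [heq]
    exact ⟨hn', hodd⟩

lemma disjoint_lang_KVMH (M : NBW Q A) (k : ℕ) : Disjoint (KVMH M k).Lang M.Lang := by
  rw [Set.disjoint_left]
  rintro w ⟨p, ⟨hp₀, hp⟩, hempty⟩ ⟨ρ, ⟨hρ₀, hρ⟩, hacc⟩
  obtain ⟨c, hc⟩ := exists_eventually_isLeast_of_kvStep (s := fun i => (p i).1) (n := k)
    (fun i => (mem_Qk_and_kvStep_of_mem_delta_KVMH (hp i)).2) hρ (by rw [hp₀, hρ₀]; rfl)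
  obtain ⟨m, hm⟩ := eventually_atTop.1 hc
  have hc_even : Even c := by
    obtain ⟨i, hi, hia⟩ := hacc (m + 1)
    obtain ⟨i, rfl⟩ := Nat.exists_eq_add_of_le' (Nat.one_le_of_lt hi)
    exact ((mem_Qk_and_kvStep_of_mem_delta_KVMH (hp i)).1 _ (hm _ (by omega)).1).2 hia
  obtain ⟨i, hi, hi_empty⟩ := hempty m
  have hstay : ∀ j ≥ i + 1, (ρ j, c) ∈ (p j).2 := by
    refine Nat.le_induction ?_ fun j hj hmem => ?_
    · exact mem_snd_of_mem_delta_KVMH hc_even (.inl hi_empty) (hρ i) (hp i) (hm _ (by omega))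
    · exact mem_snd_of_mem_delta_KVMH hc_even (.inr hmem) (hρ j) (hp j) (hm _ (by omega))
  obtain ⟨j, hj, hj_empty⟩ := hempty (i + 1)
  exact Set.eq_empty_iff_forall_notMem.1 hj_empty _ (hstay j hj)

lemma finite_of_mem_Qk [Finite Q] {s : Set (Q × ℕ)} (hs : s ∈ Qk M k) : s.Finite :=
  (Set.finite_univ.prod (Set.finite_Iic k)).subset fun x hx => ⟨trivial, (hs x hx).1⟩

open Classical in
/-- The Miyano–Hayashi component that accompanies the first components `s`: the even-ranked
elements that have been tracked since the obligations were last empty. -/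
noncomputable def obligations (M : NBW Q A) (k : ℕ) (w : ℕ → A) (s : ℕ → Set (Q × ℕ)) :
    ℕ → Set (Q × ℕ)
  | 0 => ∅
  | j + 1 =>
    (if obligations M k w s j = ∅ then s (j + 1)
      else {x ∈ s (j + 1) | ∃ y ∈ obligations M k w s j, x.1 ∈ M.delta y.1 (w j)}) \ kvOdd Q k

lemma obligations_succ_of_eq_empty {s : ℕ → Set (Q × ℕ)} {j : ℕ}
    (hj : obligations M k w s j = ∅) : obligations M k w s (j + 1) = s (j + 1) \ kvOdd Q k := by
  rw [obligations, if_pos hj]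

lemma obligations_succ_of_ne_empty {s : ℕ → Set (Q × ℕ)} {j : ℕ}
    (hj : obligations M k w s j ≠ ∅) : obligations M k w s (j + 1) =
      {x ∈ s (j + 1) | ∃ y ∈ obligations M k w s j, x.1 ∈ M.delta y.1 (w j)} \ kvOdd Q k := by
  rw [obligations, if_neg hj]

lemma obligations_subset (s : ℕ → Set (Q × ℕ)) (j : ℕ) : obligations M k w s j ⊆ s j := by
  cases j with
  | zero => exact Set.empty_subset _
  | succ j =>
    by_cases hj : obligations M k w s j = ∅
    · exact obligations_succ_of_eq_empty hj ▸ Set.sdiff_subset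
    · exact obligations_succ_of_ne_empty hj ▸ Set.sdiff_subset.trans (Set.sep_subset _ _)

lemma even_of_mem_obligations {s : ℕ → Set (Q × ℕ)} (hQ : ∀ i, s (i + 1) ∈ Qk M k) {j : ℕ}
    {x : Q × ℕ} (hx : x ∈ obligations M k w s j) : Even x.2 := by
  cases j with
  | zero => exact hx.elim
  | succ j =>
    by_contra hodd
    exact hx.2 ⟨Nat.not_even_iff_odd.1 hodd, (hQ j x (obligations_subset s _ hx)).1⟩

lemma mem_delta_KVMH_obligations {s : ℕ → Set (Q × ℕ)} {j : ℕ} (hQ : s (j + 1) ∈ Qk M k)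
    (hs : kvStep M (w j) (s j) (s (j + 1))) :
    (s (j + 1), obligations M k w s (j + 1)) ∈
      (KVMH M k).delta (s j, obligations M k w s j) (w j) := by
  by_cases hj : obligations M k w s j = ∅
  · exact (mem_delta_KVMH_of_eq_empty hj).2 ⟨⟨hQ, hs⟩, obligations_succ_of_eq_empty hj⟩
  · refine (mem_delta_KVMH_of_ne_empty hj).2 ⟨⟨hQ, hs⟩, _, Set.sep_subset _ _, ?_,
      obligations_succ_of_ne_empty hj⟩
    intro y hy l' hl'
    obtain ⟨n', hle, hn'⟩ := hs y (obligations_subset s j hy) l' hl'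
    exact ⟨n', hle, hn', y, hy, hl'⟩

lemma mem_lang_KVMH_of_levels [Finite Q] {s : ℕ → Set (Q × ℕ)} (hs₀ : s 0 = {(M.init, k)})
    (hQ : ∀ i, s (i + 1) ∈ Qk M k) (hs : ∀ i, kvStep M (w i) (s i) (s (i + 1)))
    (hodd : ∀ n (x : ℕ → Q × ℕ), (∀ i, x i ∈ s (n + i)) →
      (∀ i, (x (i + 1)).1 ∈ M.delta (x i).1 (w (n + i))) → ¬ ∀ i, Even (x i).2) :
    w ∈ (KVMH M k).Lang := by
  refine ⟨fun j => (s j, obligations M k w s j),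
    ⟨Prod.ext hs₀ rfl, fun j => mem_delta_KVMH_obligations (hQ j) (hs j)⟩, fun n => ?_⟩
  by_contra! hne
  have hfin (j : ℕ) : (obligations M k w s j).Finite := by
    cases j with
    | zero => exact Set.finite_empty
    | succ j => exact (finite_of_mem_Qk (hQ j)).subset (obligations_subset s _)
  obtain ⟨x, hx, hδ⟩ := exists_seq_of_finite_levels (S := fun i => obligations M k w s (n + i))
    (E := fun i y x => x.1 ∈ M.delta y.1 (w (n + i))) (fun i => hfin _)
    (fun i => Set.nonempty_iff_ne_empty.2 (hne _ (n.le_add_right i)))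
    (fun i x hx => by
      rw [← add_assoc, obligations_succ_of_ne_empty (hne _ (n.le_add_right i))] at hx
      exact hx.1.2)
  exact hodd n x (fun i => obligations_subset s _ (hx i)) hδ fun i =>
    even_of_mem_obligations hQ (hx i)

/-- The first components of the run of `KVMH M k` on `w` that guesses the rank function `r`. -/
def rankedLevel (M : NBW Q A) (k : ℕ) (w : ℕ → A) (r : Q × ℕ → ℕ) : ℕ → Set (Q × ℕ)
  | 0 => {(M.init, k)}
  | j + 1 => {x | x.1 ∈ M.reachable w (j + 1) ∧ x.2 = r (x.1, j + 1)}

lemma mem_reachable_and_le_of_mem_rankedLevel {r : Q × ℕ → ℕ} (hk : ∀ v, r v ≤ k) {j : ℕ}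
    {x : Q × ℕ} (hx : x ∈ rankedLevel M k w r j) :
    x.1 ∈ M.reachable w j ∧ r (x.1, j) ≤ x.2 := by
  cases j with
  | zero =>
    obtain rfl : x = (M.init, k) := hx
    exact ⟨rfl, hk _⟩
  | succ j => exact ⟨hx.1, hx.2.ge⟩

lemma mem_lang_KVMH_of_isOddRanking [Finite Q] {r : Q × ℕ → ℕ}
    (hr : IsOddRanking (M.RunEdge w) (Prod.fst ⁻¹' M.acc) r) (hk : ∀ v, r v ≤ k) :
    w ∈ (KVMH M k).Lang := by
  refine mem_lang_KVMH_of_levels (s := rankedLevel M k w r) rfl ?_ ?_ ?_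
  · intro j x hx
    exact ⟨hx.2.trans_le (hk _), fun hacc => hx.2 ▸ hr.even_of_mem hacc⟩
  · intro j x hx l' hl'
    obtain ⟨hreach, hle⟩ := mem_reachable_and_le_of_mem_rankedLevel hk hx
    exact ⟨r (l', j + 1), (hr.le_of_rel ⟨hreach, rfl, hl'⟩).trans hle, ⟨x.1, hreach, hl'⟩, rfl⟩
  · intro n x hx hδ heven
    refine hr.not_forall_even (ρ := fun i => ((x (i + 1)).1, n + i + 1))
      (fun i => ⟨(hx (i + 1)).1, rfl, hδ (i + 1)⟩) fun i => ?_
    exact (hx (i + 1)).2 ▸ heven (i + 1)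

theorem lang_KVMH [Finite Q] (hk : 2 * M.accᶜ.ncard ≤ k) : (KVMH M k).Lang = M.Langᶜ := by
  refine (disjoint_lang_KVMH M k).subset_compl_right.antisymm fun w hw => ?_
  have hwidth (j : ℕ) :
      {v : Q × ℕ | v.2 = j ∧ v ∉ Prod.fst ⁻¹' M.acc}.encard ≤ M.accᶜ.ncard := by
    rw [M.accᶜ.toFinite.cast_ncard_eq]
    refine (Set.encard_le_encard ?_).trans (Set.encard_image_le (fun l => (l, j)) _)
    rintro ⟨l, _⟩ ⟨rfl, hl⟩
    exact ⟨l, hl, rfl⟩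
  obtain ⟨r, hr, hle⟩ := exists_isOddRanking (fun _ _ h => h.2.1) hwidth fun _ =>
    NBW.eventually_notMem_acc_of_notMem_lang hw
  exact mem_lang_KVMH_of_isOddRanking hr fun v => (hle v).trans hk

end Complementation

theorem inclusion_iff_fix_general {Q₁ Q₂ A : Type*} [Finite Q₂] (M₁ : NBW Q₁ A) (M₂ : NBW Q₂ A)
    (k : ℕ) (hk : 2 * M₂.accᶜ.ncard ≤ k) :
    M₁.Lang ⊆ M₂.Lang ↔ (M₁.prod (KVMH M₂ k)).init ∉ (M₁.prod (KVMH M₂ k)).FixF := by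
  rw [GBA.init_mem_FixF_iff, NBW.lang_prod, lang_KVMH hk, Set.not_nonempty_iff_eq_empty,
    ← Set.sdiff_eq, Set.sdiff_eq_empty]

/-- `L(A₁) ⊆ L(A₂)` iff `ι_B ∉ F'_B` where `B = A₁ × KVMH(A₂)`. -/
theorem inclusion_iff_fix {Q1 Q2 A : Type*} [Fintype Q1] [Fintype Q2] [Fintype A]
    (M1 : NBW Q1 A) (M2 : NBW Q2 A) (k : ℕ)
    (hk : k = 2 * (Fintype.card Q2 - M2.acc.ncard)) :
    M1.Lang ⊆ M2.Lang ↔ (M1.prod (KVMH M2 k)).init ∉ (M1.prod (KVMH M2 k)).FixF :=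
  inclusion_iff_fix_general M1 M2 k (by rw [hk, Set.ncard_compl, Nat.card_eq_fintype_card])
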